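/- arXiv:1310.1615 — 2 statements merged into one kernel-verified Lean document; each statement's English description precedes it below -/
import Mathlib

section
/- For every ε > 0 there exists n ∈ ℕ with √2/2ⁿ < ε such that the baker's system, observed via the function Φ that maps each point of the dyadic square grid cell [k/2ⁿ, (k+1)/2ⁿ) × [l/2ⁿ, (l+1)/2ⁿ) to the cell's center, yields a stationary stochastic process {Φ(Tᵗ); t ∈ ℤ} satisfying d(m, Φ(m)) ≤ √2/2ⁿ < ε for all m ∈ M; moreover this process has the Markov property: for the partition into the 2^{2n} grid cells, the conditional distribution of the next cell given the current cell and any finite past equals the conditional distribution given the current cell alone. -/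
open MeasureTheory Set
open scoped ENNReal

def bakerGamma : Set (ℝ × ℝ) :=
  {p | (∃ n j : ℕ, j ≤ 2 ^ n ∧ p.1 = (j : ℝ) / 2 ^ n) ∨
       (∃ n j : ℕ, j ≤ 2 ^ n ∧ p.2 = (j : ℝ) / 2 ^ n)}

def bakerM : Set (ℝ × ℝ) := (Icc (0:ℝ) 1 ×ˢ Icc (0:ℝ) 1) \ bakerGamma

noncomputable def bakerT (p : ℝ × ℝ) : ℝ × ℝ :=
  if p.1 < 1 / 2 then (2 * p.1, p.2 / 2) else (2 * p.1 - 1, (p.2 + 1) / 2)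

/-- The observation function mapping each dyadic grid cell of side `1/2^n`
to the centre of that cell. -/
noncomputable def gridObs (n : ℕ) (p : ℝ × ℝ) : ℝ × ℝ :=
  (((⌊(2 ^ n : ℝ) * p.1⌋ : ℝ) + 1 / 2) / 2 ^ n, ((⌊(2 ^ n : ℝ) * p.2⌋ : ℝ) + 1 / 2) / 2 ^ n)

/-! The baker's map followed by the reflection in the diagonal is an involution, so the map is
invertible and its past is the mirror image of its future. On each half of the square it is affine
of determinant one, hence it preserves Lebesgue measure, which gives stationarity.

Let `X × Y` be a grid cell. The future of `(x, y)` depends on `y` only through its grid interval,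
because contraction by a factor of two maps grid intervals into grid intervals; by reflection, the
past depends on `x` only through its grid interval. Inside `X × Y`, past events are therefore of the
form `X × B` and future events of the form `A × Y`, and such events are independent under the
normalised product measure. -/

section General

variable {α β : Type*} [MeasurableSpace α] [MeasurableSpace β]

theorem measure_prod_inter_div_eq {μ : Measure α} {ν : Measure β} [SFinite ν]
    {X : Set α} {Y : Set β} {P F : Set (α × β)}
    (hP : ∀ x ∈ X, ∀ x' ∈ X, ∀ y ∈ Y, (x, y) ∈ P → (x', y) ∈ P)
    (hF : ∀ x ∈ X, ∀ y ∈ Y, ∀ y' ∈ Y, (x, y) ∈ F → (x, y') ∈ F)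
    (hpos : μ.prod ν (X ×ˢ Y ∩ P) ≠ 0) (hY : ν Y ≠ ∞) :
    μ.prod ν (X ×ˢ Y ∩ P ∩ F) / μ.prod ν (X ×ˢ Y ∩ P) =
      μ.prod ν (X ×ˢ Y ∩ F) / μ.prod ν (X ×ˢ Y) := by
  set A : Set α := {x ∈ X | ∃ y ∈ Y, (x, y) ∈ F}
  set B : Set β := {y ∈ Y | ∃ x ∈ X, (x, y) ∈ P}
  have hBY : B ⊆ Y := sep_subset _ _
  have past_eq : X ×ˢ Y ∩ P = X ×ˢ B := by
    ext ⟨x, y⟩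
    constructor
    · rintro ⟨⟨hx, hy⟩, h⟩
      exact ⟨hx, hy, x, hx, h⟩
    · rintro ⟨hx, hy, x', hx', h⟩
      exact ⟨⟨hx, hy⟩, hP x' hx' x hx y hy h⟩
  have future_eq : ∀ C ⊆ Y, X ×ˢ C ∩ F = A ×ˢ C := by
    intro C hC
    ext ⟨x, y⟩
    constructor
    · rintro ⟨⟨hx, hy⟩, h⟩
      exact ⟨⟨hx, y, hC hy, h⟩, hy⟩
    · rintro ⟨⟨hx, y', hy', h⟩, hy⟩
      exact ⟨⟨hx, hy⟩, hF x hx y' hy' y (hC hy) h⟩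
  rw [past_eq, Measure.prod_prod] at hpos
  have hB : ν B ≠ 0 := right_ne_zero_of_mul hpos
  have hY₀ : ν Y ≠ 0 := fun h ↦ hB (measure_mono_null hBY h)
  rw [past_eq, future_eq B hBY, future_eq Y Subset.rfl]
  simp only [Measure.prod_prod]
  rw [ENNReal.mul_div_mul_right _ _ hB (ne_top_of_le_ne_top hY (measure_mono hBY)),
    ENNReal.mul_div_mul_right _ _ hY₀ hY]

theorem measurePreserving_ite {μ : Measure α} {ν : Measure β} {f g : α → β} {p : α → Prop}
    {q : β → Prop} [DecidablePred p] (hp : MeasurableSet {x | p x}) (hq : MeasurableSet {y | q y})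
    (hf : MeasurePreserving f (μ.restrict {x | p x}) (ν.restrict {y | q y}))
    (hg : MeasurePreserving g (μ.restrict {x | p x}ᶜ) (ν.restrict {y | q y}ᶜ)) :
    MeasurePreserving (fun x ↦ if p x then f x else g x) μ ν := by
  have hfg : Measurable (fun x ↦ if p x then f x else g x) := hf.measurable.ite hp hg.measurable
  have hf' := hf.congr hfg ((ae_restrict_mem hp).mono fun _ hx ↦ (if_pos hx).symm)
  have hg' := hg.congr hfg ((ae_restrict_mem hp.compl).mono fun _ hx ↦ (if_neg hx).symm)
  simpa only [Measure.restrict_add_restrict_compl hp, Measure.restrict_add_restrict_compl hq]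
    using hf'.add_measure hg'

theorem measurePreserving_mul_add_prod_inv_mul_add {c : ℝ} (hc : c ≠ 0) (a b : ℝ) :
    MeasurePreserving (fun p : ℝ × ℝ ↦ (c * p.1 + a, c⁻¹ * p.2 + b)) := by
  have scale : MeasurePreserving (Prod.map (c * ·) (c⁻¹ * ·)) (volume : Measure (ℝ × ℝ)) := by
    refine ⟨by fun_prop, ?_⟩
    rw [Measure.volume_eq_prod, ← Measure.map_prod_map _ _ (by fun_prop) (by fun_prop),
      Real.map_volume_mul_left hc, Real.map_volume_mul_left (inv_ne_zero hc),
      Measure.prod_smul_right, Measure.prod_smul_left, smul_smul,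
      ← ENNReal.ofReal_mul (abs_nonneg _), ← abs_mul, inv_inv, mul_inv_cancel₀ hc]
    simp only [abs_one, ENNReal.ofReal_one, one_smul]
  exact (measurePreserving_add_right volume (a, b)).comp scale

variable {μ : Measure α} {e : α ≃ᵐ α}

theorem measure_preimage_zpow (he : MeasurePreserving e μ μ) (t : ℤ) :
    ∀ s : Set α, μ (⇑((e : Equiv.Perm α) ^ t) ⁻¹' s) = μ s := by
  refine zpow_induction_left (P := fun g : Equiv.Perm α ↦ ∀ s : Set α, μ (g ⁻¹' s) = μ s)
    (fun _ ↦ rfl) (fun g ih s ↦ ?_) (fun g ih s ↦ ?_) t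
  · exact (ih _).trans (he.measure_preimage_equiv s)
  · exact (ih _).trans ((he.symm e).measure_preimage_equiv s)

theorem measure_setOf_forall_zpow_add {ι γ : Type*} (he : MeasurePreserving e μ μ) (φ : α → γ)
    (t : ι → ℤ) (h : ℤ) (A : ι → Set γ) :
    μ {x | ∀ i, φ (((e : Equiv.Perm α) ^ (t i + h)) x) ∈ A i} =
      μ {x | ∀ i, φ (((e : Equiv.Perm α) ^ t i) x) ∈ A i} := by
  simp only [zpow_add]
  exact measure_preimage_zpow he h {x | ∀ i, φ (((e : Equiv.Perm α) ^ t i) x) ∈ A i}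

end General

/-- Dyadic rationals, as real numbers. Allowing integer numerators makes this predicate invariant
under halving and unit translations. -/
def IsDyadic (x : ℝ) : Prop := ∃ n : ℕ, ∃ z : ℤ, x = z / 2 ^ n

theorem isDyadic_div_two {x : ℝ} : IsDyadic (x / 2) ↔ IsDyadic x := by
  constructor
  · rintro ⟨n, z, h⟩
    exact ⟨n, 2 * z, by push_cast; linear_combination 2 * h⟩
  · rintro ⟨n, z, rfl⟩
    exact ⟨n + 1, z, by rw [pow_succ, div_div]⟩

theorem isDyadic_add_one {x : ℝ} : IsDyadic (x + 1) ↔ IsDyadic x := by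
  constructor
  · rintro ⟨n, z, h⟩
    exact ⟨n, z - 2 ^ n, by push_cast; rw [sub_div, div_self (by positivity), ← h]; ring⟩
  · rintro ⟨n, z, rfl⟩
    exact ⟨n, z + 2 ^ n, by push_cast; rw [add_div, div_self (by positivity)]⟩

theorem isDyadic_iff_of_mem_Icc {x : ℝ} (hx : x ∈ Icc (0 : ℝ) 1) :
    IsDyadic x ↔ ∃ n j : ℕ, j ≤ 2 ^ n ∧ x = (j : ℝ) / 2 ^ n := by
  constructor
  · rintro ⟨n, z, rfl⟩
    have two_pow_pos : (0 : ℝ) < 2 ^ n := by positivity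
    have z_nonneg : 0 ≤ z := by
      have := (le_div_iff₀ two_pow_pos).1 hx.1
      rw [zero_mul] at this
      exact_mod_cast this
    have z_le : (z : ℝ) ≤ 2 ^ n := (div_le_one two_pow_pos).1 hx.2
    lift z to ℕ using z_nonneg
    exact ⟨n, z, by exact_mod_cast z_le, rfl⟩
  · rintro ⟨n, j, -, rfl⟩
    exact ⟨n, j, rfl⟩

theorem countable_setOf_isDyadic : {x | IsDyadic x}.Countable := by
  refine (countable_range fun q : ℕ × ℤ ↦ (q.2 : ℝ) / 2 ^ q.1).mono ?_
  rintro x ⟨n, z, rfl⟩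
  exact ⟨(n, z), rfl⟩

/-- The non-dyadic points of the unit interval; `bakerM` is the square of this set. -/
def nonDyadicUnit : Set ℝ := Ioo 0 1 \ {x | IsDyadic x}

theorem measurableSet_nonDyadicUnit : MeasurableSet nonDyadicUnit :=
  measurableSet_Ioo.diff countable_setOf_isDyadic.measurableSet

theorem mem_nonDyadicUnit_iff {x : ℝ} :
    x ∈ nonDyadicUnit ↔ x ∈ Icc (0 : ℝ) 1 ∧ ¬ ∃ n j : ℕ, j ≤ 2 ^ n ∧ x = (j : ℝ) / 2 ^ n := by
  constructor
  · rintro ⟨hx, hdyadic⟩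
    have hx' := Ioo_subset_Icc_self hx
    exact ⟨hx', (isDyadic_iff_of_mem_Icc hx').not.1 hdyadic⟩
  · rintro ⟨hx, hdyadic⟩
    have hdyadic' := (isDyadic_iff_of_mem_Icc hx).not.2 hdyadic
    refine ⟨⟨hx.1.lt_of_ne' ?_, hx.2.lt_of_ne ?_⟩, hdyadic'⟩
    · rintro rfl
      exact hdyadic' ⟨0, 0, by simp⟩
    · rintro rfl
      exact hdyadic' ⟨0, 1, by simp⟩

theorem div_two_mem_nonDyadicUnit {x : ℝ} :
    x / 2 ∈ nonDyadicUnit ∧ x / 2 < 1 / 2 ↔ x ∈ nonDyadicUnit := by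
  simp only [nonDyadicUnit, mem_sdiff, mem_Ioo, mem_ofPred_eq, isDyadic_div_two]
  constructor
  · rintro ⟨⟨⟨_, _⟩, h⟩, _⟩
    exact ⟨⟨by linarith, by linarith⟩, h⟩
  · rintro ⟨⟨_, _⟩, h⟩
    exact ⟨⟨⟨by linarith, by linarith⟩, h⟩, by linarith⟩

theorem add_one_div_two_mem_nonDyadicUnit {x : ℝ} :
    (x + 1) / 2 ∈ nonDyadicUnit ∧ ¬ (x + 1) / 2 < 1 / 2 ↔ x ∈ nonDyadicUnit := by
  simp only [nonDyadicUnit, mem_sdiff, mem_Ioo, mem_ofPred_eq, isDyadic_div_two, isDyadic_add_one]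
  constructor
  · rintro ⟨⟨⟨_, _⟩, h⟩, _⟩
    refine ⟨⟨lt_of_le_of_ne (by linarith) ?_, by linarith⟩, h⟩
    rintro rfl
    exact h ⟨0, 0, by simp⟩
  · rintro ⟨⟨_, _⟩, h⟩
    exact ⟨⟨⟨by linarith, by linarith⟩, h⟩, by linarith⟩

theorem bakerM_eq_prod : bakerM = nonDyadicUnit ×ˢ nonDyadicUnit := by
  ext p
  simp only [bakerM, bakerGamma, mem_sdiff, mem_prod, mem_ofPred_eq, not_or, mem_nonDyadicUnit_iff]
  tauto

theorem measurableSet_bakerM : MeasurableSet bakerM :=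
  bakerM_eq_prod ▸ measurableSet_nonDyadicUnit.prod measurableSet_nonDyadicUnit

theorem swap_mem_bakerM {p : ℝ × ℝ} : p.swap ∈ bakerM ↔ p ∈ bakerM := by
  simp only [bakerM_eq_prod, mem_prod, Prod.fst_swap, Prod.snd_swap, and_comm]

theorem fst_lt_half_and_mem_bakerM_iff {p : ℝ × ℝ} :
    p.1 < 1 / 2 ∧ p ∈ bakerM ↔ p.2 / 2 < 1 / 2 ∧ (2 * p.1, p.2 / 2) ∈ bakerM := by
  have fst_iff := div_two_mem_nonDyadicUnit (x := 2 * p.1)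
  have snd_iff := div_two_mem_nonDyadicUnit (x := p.2)
  rw [mul_div_cancel_left₀ p.1 two_ne_zero] at fst_iff
  simp only [bakerM_eq_prod, mem_prod]
  tauto

theorem not_fst_lt_half_and_mem_bakerM_iff {p : ℝ × ℝ} :
    ¬ p.1 < 1 / 2 ∧ p ∈ bakerM ↔
      ¬ (p.2 + 1) / 2 < 1 / 2 ∧ (2 * p.1 - 1, (p.2 + 1) / 2) ∈ bakerM := by
  have fst_iff := add_one_div_two_mem_nonDyadicUnit (x := 2 * p.1 - 1)
  have snd_iff := add_one_div_two_mem_nonDyadicUnit (x := p.2)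
  rw [sub_add_cancel, mul_div_cancel_left₀ p.1 two_ne_zero] at fst_iff
  simp only [bakerM_eq_prod, mem_prod]
  tauto

theorem bakerT_mem_bakerM {p : ℝ × ℝ} (hp : p ∈ bakerM) : bakerT p ∈ bakerM := by
  unfold bakerT
  split_ifs with h
  · exact (fst_lt_half_and_mem_bakerM_iff.1 ⟨h, hp⟩).2
  · exact (not_fst_lt_half_and_mem_bakerM_iff.1 ⟨h, hp⟩).2

theorem bakerT_swap_bakerT {p : ℝ × ℝ} (hp : p ∈ bakerM) :
    bakerT (bakerT p).swap = p.swap := by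
  by_cases h : p.1 < 1 / 2
  · have snd_lt := (fst_lt_half_and_mem_bakerM_iff.1 ⟨h, hp⟩).1
    simp only [bakerT, if_pos h, Prod.swap_prod_mk, if_pos snd_lt]
    ext <;> simp only [Prod.fst_swap, Prod.snd_swap] <;> ring
  · have not_snd_lt := (not_fst_lt_half_and_mem_bakerM_iff.1 ⟨h, hp⟩).1
    simp only [bakerT, if_neg h, Prod.swap_prod_mk, if_neg not_snd_lt]
    ext <;> simp only [Prod.fst_swap, Prod.snd_swap] <;> ring

theorem measurable_bakerT : Measurable bakerT :=
  Measurable.ite (measurableSet_lt measurable_fst measurable_const) (by fun_prop) (by fun_prop)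

theorem measurePreserving_bakerT :
    MeasurePreserving bakerT (volume.restrict bakerM) (volume.restrict bakerM) := by
  have left_half : MeasurableSet {p : ℝ × ℝ | p.1 < 1 / 2} :=
    measurableSet_lt measurable_fst measurable_const
  have lower_half : MeasurableSet {p : ℝ × ℝ | p.2 < 1 / 2} :=
    measurableSet_lt measurable_snd measurable_const
  have left_branch : MeasurePreserving (fun p : ℝ × ℝ ↦ (2 * p.1, p.2 / 2)) := by
    convert measurePreserving_mul_add_prod_inv_mul_add two_ne_zero 0 0 using 3 <;> ring
  have right_branch : MeasurePreserving (fun p : ℝ × ℝ ↦ (2 * p.1 - 1, (p.2 + 1) / 2)) := by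
    convert measurePreserving_mul_add_prod_inv_mul_add two_ne_zero (-1) (1 / 2) using 3 <;> ring
  have left_half_eq : {p : ℝ × ℝ | p.1 < 1 / 2} ∩ bakerM =
      (fun p ↦ (2 * p.1, p.2 / 2)) ⁻¹' ({p | p.2 < 1 / 2} ∩ bakerM) := by
    ext p
    exact fst_lt_half_and_mem_bakerM_iff
  have right_half_eq : {p : ℝ × ℝ | p.1 < 1 / 2}ᶜ ∩ bakerM =
      (fun p ↦ (2 * p.1 - 1, (p.2 + 1) / 2)) ⁻¹' ({p | p.2 < 1 / 2}ᶜ ∩ bakerM) := by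
    ext p
    exact not_fst_lt_half_and_mem_bakerM_iff
  refine measurePreserving_ite left_half lower_half ?_ ?_
  · rw [Measure.restrict_restrict left_half, Measure.restrict_restrict lower_half, left_half_eq]
    exact left_branch.restrict_preimage (lower_half.inter measurableSet_bakerM)
  · rw [Measure.restrict_restrict left_half.compl, Measure.restrict_restrict lower_half.compl,
      right_half_eq]
    exact right_branch.restrict_preimage (lower_half.compl.inter measurableSet_bakerM)

open Classical in
/-- The baker's map on `bakerM` followed by the reflection in the diagonal, extended to an
involution of the plane by the reflection off `bakerM`. -/
noncomputable def bakerReflection (p : ℝ × ℝ) : ℝ × ℝ :=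
  if p ∈ bakerM then (bakerT p).swap else p.swap

theorem bakerReflection_of_mem {p : ℝ × ℝ} (hp : p ∈ bakerM) :
    bakerReflection p = (bakerT p).swap := if_pos hp

theorem bakerReflection_of_notMem {p : ℝ × ℝ} (hp : p ∉ bakerM) :
    bakerReflection p = p.swap := if_neg hp

theorem bakerReflection_involutive : Function.Involutive bakerReflection := by
  intro p
  by_cases hp : p ∈ bakerM
  · have := swap_mem_bakerM.2 (bakerT_mem_bakerM hp)
    rw [bakerReflection_of_mem hp, bakerReflection_of_mem this, bakerT_swap_bakerT hp,
      Prod.swap_swap]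
  · rw [bakerReflection_of_notMem hp, bakerReflection_of_notMem (swap_mem_bakerM.not.2 hp),
      Prod.swap_swap]

theorem measurable_bakerReflection : Measurable bakerReflection :=
  Measurable.ite measurableSet_bakerM (measurable_swap.comp measurable_bakerT) measurable_swap

/-- The baker's map as an automorphism of the plane: `bakerT` on `bakerM` and the identity
elsewhere. -/
noncomputable def bakerEquiv : (ℝ × ℝ) ≃ᵐ (ℝ × ℝ) :=
  (MeasurableEquiv.ofInvolutive bakerReflection bakerReflection_involutive
    measurable_bakerReflection).trans MeasurableEquiv.prodComm

theorem bakerEquiv_of_mem {p : ℝ × ℝ} (hp : p ∈ bakerM) : bakerEquiv p = bakerT p :=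
  congrArg Prod.swap (bakerReflection_of_mem hp)

theorem bakerEquiv_of_notMem {p : ℝ × ℝ} (hp : p ∉ bakerM) : bakerEquiv p = p :=
  congrArg Prod.swap (bakerReflection_of_notMem hp)

theorem bakerEquiv_mem_bakerM_iff {p : ℝ × ℝ} : bakerEquiv p ∈ bakerM ↔ p ∈ bakerM := by
  by_cases hp : p ∈ bakerM
  · simp only [bakerEquiv_of_mem hp, bakerT_mem_bakerM hp, hp]
  · rw [bakerEquiv_of_notMem hp]

theorem measurePreserving_bakerEquiv :
    MeasurePreserving bakerEquiv (volume.restrict bakerM) (volume.restrict bakerM) :=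
  measurePreserving_bakerT.congr bakerEquiv.measurable <|
    (ae_restrict_mem measurableSet_bakerM).mono fun _ hp ↦ (bakerEquiv_of_mem hp).symm

/-- The `ℤ`-indexed dynamics generated by the baker's map. -/
noncomputable def bakerFlow (t : ℤ) : Equiv.Perm (ℝ × ℝ) := (bakerEquiv : Equiv.Perm (ℝ × ℝ)) ^ t

theorem bakerFlow_one_of_mem {p : ℝ × ℝ} (hp : p ∈ bakerM) : bakerFlow 1 p = bakerT p := by
  rw [bakerFlow, zpow_one]
  exact bakerEquiv_of_mem hp

theorem bakerFlow_add_apply (s t : ℤ) (p : ℝ × ℝ) :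
    bakerFlow (s + t) p = bakerFlow s (bakerFlow t p) := by
  simp only [bakerFlow, zpow_add, Equiv.Perm.mul_apply]

theorem mapsTo_bakerFlow (t : ℤ) : MapsTo (bakerFlow t) bakerM bakerM := by
  refine zpow_induction_right (P := fun g : Equiv.Perm (ℝ × ℝ) ↦ MapsTo g bakerM bakerM)
    (mapsTo_id _) (fun g hg p hp ↦ hg ?_) (fun g hg p hp ↦ hg ?_) t
  · exact bakerEquiv_mem_bakerM_iff.2 hp
  · rw [← bakerEquiv_mem_bakerM_iff]
    simpa using hp

theorem bakerFlow_neg_apply (t : ℤ) (p : ℝ × ℝ) :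
    bakerFlow (-t) p = (bakerFlow t p.swap).swap := by
  let σ : Equiv.Perm (ℝ × ℝ) := Equiv.prodComm ℝ ℝ
  have inv_eq_conj : (bakerEquiv : Equiv.Perm (ℝ × ℝ))⁻¹ = σ * bakerEquiv * σ⁻¹ := rfl
  rw [bakerFlow, zpow_neg, ← inv_zpow, inv_eq_conj, conj_zpow]
  rfl

theorem measure_preimage_bakerFlow (t : ℤ) (s : Set (ℝ × ℝ)) :
    volume.restrict bakerM (bakerFlow t ⁻¹' s) = volume.restrict bakerM s :=
  measure_preimage_zpow measurePreserving_bakerEquiv t s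

/-- The centre of the interval `[k / 2 ^ n, (k + 1) / 2 ^ n)` containing `x`; both coordinates of
`gridObs n` are of this form. -/
noncomputable def gridCoord (n : ℕ) (x : ℝ) : ℝ := ((⌊(2 ^ n : ℝ) * x⌋ : ℝ) + 1 / 2) / 2 ^ n

theorem gridObs_eq_mk (n : ℕ) (p : ℝ × ℝ) :
    gridObs n p = (gridCoord n p.1, gridCoord n p.2) := rfl

theorem gridCoord_eq_iff {n : ℕ} {x y : ℝ} :
    gridCoord n x = gridCoord n y ↔ ⌊(2 ^ n : ℝ) * x⌋ = ⌊(2 ^ n : ℝ) * y⌋ := by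
  simp only [gridCoord, div_left_inj' (pow_ne_zero n (two_ne_zero (α := ℝ))), add_left_inj,
    Int.cast_inj]

theorem gridCoord_div_two {n : ℕ} {x y : ℝ} (h : gridCoord n x = gridCoord n y) :
    gridCoord n (x / 2) = gridCoord n (y / 2) := by
  have floor_half (z : ℝ) : ⌊(2 ^ n : ℝ) * (z / 2)⌋ = ⌊(2 ^ n : ℝ) * z⌋ / 2 := by
    rw [← mul_div_assoc]
    exact_mod_cast Int.floor_div_natCast ((2 ^ n : ℝ) * z) 2
  rw [gridCoord_eq_iff] at h ⊢
  rw [floor_half, floor_half, h]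

theorem gridCoord_add_one {n : ℕ} {x y : ℝ} (h : gridCoord n x = gridCoord n y) :
    gridCoord n (x + 1) = gridCoord n (y + 1) := by
  have floor_add_one (z : ℝ) : ⌊(2 ^ n : ℝ) * (z + 1)⌋ = ⌊(2 ^ n : ℝ) * z⌋ + 2 ^ n := by
    rw [mul_add_one]
    exact_mod_cast Int.floor_add_intCast ((2 ^ n : ℝ) * z) (2 ^ n)
  rw [gridCoord_eq_iff] at h ⊢
  rw [floor_add_one, floor_add_one, h]

theorem dist_gridCoord_le (n : ℕ) (x : ℝ) : dist x (gridCoord n x) ≤ 1 / 2 / 2 ^ n := by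
  have two_pow_pos : (0 : ℝ) < 2 ^ n := by positivity
  have hx : x - gridCoord n x =
      ((2 ^ n : ℝ) * x - ⌊(2 ^ n : ℝ) * x⌋ - 1 / 2) / 2 ^ n := by
    rw [gridCoord]
    field_simp
    ring
  rw [Real.dist_eq, hx, abs_div, abs_of_pos two_pow_pos, Int.self_sub_floor]
  gcongr
  rw [abs_le]
  constructor <;> linarith [Int.fract_nonneg ((2 ^ n : ℝ) * x), Int.fract_lt_one ((2 ^ n : ℝ) * x)]

theorem dist_gridObs_le (n : ℕ) (m : ℝ × ℝ) : dist m (gridObs n m) ≤ 1 / 2 / 2 ^ n :=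
  max_le (dist_gridCoord_le n m.1) (dist_gridCoord_le n m.2)

theorem fst_bakerT_congr {p q : ℝ × ℝ} (h : p.1 = q.1) : (bakerT p).1 = (bakerT q).1 := by
  unfold bakerT
  rw [h]
  split_ifs <;> rfl

theorem gridCoord_snd_bakerT_congr {n : ℕ} {p q : ℝ × ℝ} (hfst : p.1 = q.1)
    (hsnd : gridCoord n p.2 = gridCoord n q.2) :
    gridCoord n (bakerT p).2 = gridCoord n (bakerT q).2 := by
  unfold bakerT
  rw [hfst]
  split_ifs
  · exact gridCoord_div_two hsnd
  · exact gridCoord_div_two (gridCoord_add_one hsnd)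

/-- The process obtained by observing the baker's system through the grid of side `1 / 2 ^ n`. -/
noncomputable def gridProcess (n : ℕ) (t : ℤ) (p : ℝ × ℝ) : ℝ × ℝ := gridObs n (bakerFlow t p)

theorem gridProcess_add (n : ℕ) (s t : ℤ) (p : ℝ × ℝ) :
    gridProcess n (s + t) p = gridProcess n s (bakerFlow t p) :=
  congrArg (gridObs n) (bakerFlow_add_apply s t p)

theorem gridProcess_neg (n : ℕ) (t : ℤ) (p : ℝ × ℝ) :
    gridProcess n (-t) p = (gridProcess n t p.swap).swap :=
  congrArg (gridObs n) (bakerFlow_neg_apply t p)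

theorem gridProcess_future_congr {n : ℕ} {p q : ℝ × ℝ} (hp : p ∈ bakerM) (hq : q ∈ bakerM)
    (hfst : p.1 = q.1) (hsnd : gridCoord n p.2 = gridCoord n q.2) (r : ℕ) :
    gridProcess n r p = gridProcess n r q := by
  induction r generalizing p q with
  | zero => exact congrArg₂ Prod.mk (congrArg (gridCoord n) hfst) hsnd
  | succ r ih =>
    push_cast
    rw [gridProcess_add, gridProcess_add, bakerFlow_one_of_mem hp, bakerFlow_one_of_mem hq]
    exact ih (bakerT_mem_bakerM hp) (bakerT_mem_bakerM hq) (fst_bakerT_congr hfst)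
      (gridCoord_snd_bakerT_congr hfst hsnd)

theorem gridProcess_past_congr {n : ℕ} {p q : ℝ × ℝ} (hp : p ∈ bakerM) (hq : q ∈ bakerM)
    (hfst : gridCoord n p.1 = gridCoord n q.1) (hsnd : p.2 = q.2) (r : ℕ) :
    gridProcess n (-r) p = gridProcess n (-r) q := by
  rw [gridProcess_neg, gridProcess_neg, gridProcess_future_congr
    (swap_mem_bakerM.2 hp) (swap_mem_bakerM.2 hq) hsnd hfst r]

theorem gridProcess_stationary {ι : Type*} (n : ℕ) (t : ι → ℤ) (h : ℤ) (A : ι → Set (ℝ × ℝ)) :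
    volume.restrict bakerM {x | ∀ i, gridProcess n (t i + h) x ∈ A i} =
      volume.restrict bakerM {x | ∀ i, gridProcess n (t i) x ∈ A i} :=
  measure_setOf_forall_zpow_add measurePreserving_bakerEquiv (gridObs n) t h A

theorem gridObs_preimage_inter_bakerM (n : ℕ) (o : ℝ × ℝ) :
    gridObs n ⁻¹' {o} ∩ bakerM =
      (nonDyadicUnit ∩ gridCoord n ⁻¹' {o.1}) ×ˢ (nonDyadicUnit ∩ gridCoord n ⁻¹' {o.2}) := by
  ext p
  simp only [bakerM_eq_prod, gridObs_eq_mk, mem_inter_iff, mem_preimage, mem_singleton_iff,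
    mem_prod, Prod.ext_iff]
  tauto

theorem volume_nonDyadicUnit_ne_top : volume nonDyadicUnit ≠ ∞ :=
  ((measure_mono sdiff_subset).trans_lt measure_Ioo_lt_top).ne

theorem measure_gridObs_inter_div_eq {n : ℕ} {o : ℝ × ℝ} {P F : Set (ℝ × ℝ)}
    (hP : ∀ p ∈ bakerM, ∀ q ∈ bakerM, gridCoord n p.1 = gridCoord n q.1 → p.2 = q.2 →
      p ∈ P → q ∈ P)
    (hF : ∀ p ∈ bakerM, ∀ q ∈ bakerM, p.1 = q.1 → gridCoord n p.2 = gridCoord n q.2 →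
      p ∈ F → q ∈ F)
    (hpos : volume.restrict bakerM (gridObs n ⁻¹' {o} ∩ P) ≠ 0) :
    volume.restrict bakerM (gridObs n ⁻¹' {o} ∩ P ∩ F) /
        volume.restrict bakerM (gridObs n ⁻¹' {o} ∩ P) =
      volume.restrict bakerM (gridObs n ⁻¹' {o} ∩ F) /
        volume.restrict bakerM (gridObs n ⁻¹' {o}) := by
  simp only [Measure.restrict_apply' measurableSet_bakerM, inter_right_comm _ _ bakerM,
    gridObs_preimage_inter_bakerM, Measure.volume_eq_prod] at hpos ⊢
  refine measure_prod_inter_div_eq ?_ ?_ hpos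
    (measure_ne_top_of_subset inter_subset_left volume_nonDyadicUnit_ne_top)
  · rintro x ⟨hx, hxo⟩ x' ⟨hx', hxo'⟩ y ⟨hy, -⟩
    rw [bakerM_eq_prod] at hP
    exact hP (x, y) ⟨hx, hy⟩ (x', y) ⟨hx', hy⟩ (hxo.trans hxo'.symm) rfl
  · rintro x ⟨hx, -⟩ y ⟨hy, hyo⟩ y' ⟨hy', hyo'⟩
    rw [bakerM_eq_prod] at hF
    exact hF (x, y) ⟨hx, hy⟩ (x, y') ⟨hx, hy'⟩ rfl (hyo.trans hyo'.symm)

theorem gridProcess_markov (n : ℕ) (t : ℤ) (o : ℝ × ℝ) (past future : Set (ℕ → ℝ × ℝ))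
    (hpos : volume.restrict bakerM
      {x | gridProcess n t x = o ∧ (fun r : ℕ ↦ gridProcess n (t - r) x) ∈ past} ≠ 0) :
    volume.restrict bakerM
        ({x | gridProcess n t x = o ∧ (fun r : ℕ ↦ gridProcess n (t - r) x) ∈ past} ∩
          {x | (fun r : ℕ ↦ gridProcess n (t + r) x) ∈ future}) /
      volume.restrict bakerM
        {x | gridProcess n t x = o ∧ (fun r : ℕ ↦ gridProcess n (t - r) x) ∈ past} =
    volume.restrict bakerM
        ({x | gridProcess n t x = o} ∩
          {x | (fun r : ℕ ↦ gridProcess n (t + r) x) ∈ future}) /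
      volume.restrict bakerM {x | gridProcess n t x = o} := by
  set P : Set (ℝ × ℝ) := {x | (fun r : ℕ ↦ gridProcess n (-r) x) ∈ past}
  set F : Set (ℝ × ℝ) := {x | (fun r : ℕ ↦ gridProcess n r x) ∈ future}
  have present_eq :
      {x | gridProcess n t x = o} = bakerFlow t ⁻¹' (gridObs n ⁻¹' {o}) := rfl
  have past_eq :
      {x | gridProcess n t x = o ∧ (fun r : ℕ ↦ gridProcess n (t - r) x) ∈ past} =
        bakerFlow t ⁻¹' (gridObs n ⁻¹' {o} ∩ P) := by
    simp only [sub_eq_neg_add, gridProcess_add]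
    rfl
  have future_eq : {x | (fun r : ℕ ↦ gridProcess n (t + r) x) ∈ future} = bakerFlow t ⁻¹' F := by
    simp only [add_comm t, gridProcess_add]
    rfl
  rw [past_eq, measure_preimage_bakerFlow] at hpos
  rw [past_eq, future_eq, present_eq]
  simp only [← preimage_inter, measure_preimage_bakerFlow]
  refine measure_gridObs_inter_div_eq (fun p hp q hq hfst hsnd ↦ ?_)
    (fun p hp q hq hfst hsnd ↦ ?_) hpos
  · simp only [P, mem_ofPred_eq, gridProcess_past_congr hp hq hfst hsnd, imp_self]
  · simp only [F, mem_ofPred_eq, gridProcess_future_congr hp hq hfst hsnd, imp_self]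

theorem stmt14 :
    ∀ ε : ℝ, 0 < ε → ∃ n : ℕ, Real.sqrt 2 / 2 ^ n < ε ∧
      -- the observation is within √2/2ⁿ < ε of the actual state
      (∀ m ∈ bakerM, dist m (gridObs n m) ≤ Real.sqrt 2 / 2 ^ n) ∧
      -- the ℤ-indexed dynamics extending the baker's map
      ∃ S : ℤ → (ℝ × ℝ → ℝ × ℝ),
        (∀ p ∈ bakerM, S 0 p = p) ∧
        (∀ p ∈ bakerM, S 1 p = bakerT p) ∧
        (∀ s t : ℤ, ∀ p ∈ bakerM, S (s + t) p = S s (S t p)) ∧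
        (∀ t : ℤ, Set.MapsTo (S t) bakerM bakerM) ∧
        -- the observed process Z_t = gridObs n ∘ S t is stationary
        (∀ (k : ℕ) (t : Fin k → ℤ) (h : ℤ) (A : Fin k → Set (ℝ × ℝ)),
          (∀ i, MeasurableSet (A i)) →
          volume.restrict bakerM {x | ∀ i, gridObs n (S (t i + h) x) ∈ A i}
            = volume.restrict bakerM {x | ∀ i, gridObs n (S (t i) x) ∈ A i}) ∧
        -- the Markov property
        (∀ (t : ℤ) (k : ℕ) (b : Fin k → ℝ × ℝ) (oi oj : ℝ × ℝ),
          0 < volume.restrict bakerM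
              {x | gridObs n (S t x) = oi ∧ ∀ r : Fin k, gridObs n (S (t - 1 - r) x) = b r} →
          0 < volume.restrict bakerM {x | gridObs n (S t x) = oi} →
          volume.restrict bakerM
              ({x | gridObs n (S t x) = oi ∧ ∀ r : Fin k, gridObs n (S (t - 1 - r) x) = b r}
                ∩ {x | gridObs n (S (t + 1) x) = oj})
            / volume.restrict bakerM
              {x | gridObs n (S t x) = oi ∧ ∀ r : Fin k, gridObs n (S (t - 1 - r) x) = b r}
          = volume.restrict bakerM
              ({x | gridObs n (S t x) = oi} ∩ {x | gridObs n (S (t + 1) x) = oj})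
            / volume.restrict bakerM {x | gridObs n (S t x) = oi}) := by
  intro ε hε
  obtain ⟨n, hn⟩ : ∃ n : ℕ, √2 / 2 ^ n < ε := by
    obtain ⟨n, hn⟩ := pow_unbounded_of_one_lt (√2 / ε) one_lt_two
    exact ⟨n, (div_lt_comm₀ hε (by positivity)).1 hn⟩
  have half_le_sqrt_two : (1 / 2 : ℝ) ≤ √2 :=
    one_half_lt_one.le.trans (Real.one_le_sqrt.2 one_le_two)
  refine ⟨n, hn, fun m _ ↦ (dist_gridObs_le n m).trans (by gcongr), fun t ↦ bakerFlow t,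
    fun _ _ ↦ rfl, fun _ ↦ bakerFlow_one_of_mem, fun s t p _ ↦ bakerFlow_add_apply s t p,
    mapsTo_bakerFlow, fun k t h A _ ↦ gridProcess_stationary n t h A, ?_⟩
  intro t k b oi oj hpos _
  have past_time (r : Fin k) : t - 1 - (r : ℤ) = t - ((r + 1 : ℕ) : ℤ) := by
    push_cast
    ring
  simp only [past_time] at hpos ⊢
  exact gridProcess_markov n t oi {z | ∀ r : Fin k, z (r + 1) = b r} {z | z 1 = oj} hpos.ne'
end

section
/- If two Bernoulli shifts with probability vectors (p₁,...,pₙ) and (q₁,...,q_m) are isomorphic as measure-preserving systems, then they have the same Kolmogorov–Sinai entropy, i.e. Σᵢ −pᵢ log₂ pᵢ = Σⱼ −qⱼ log₂ qⱼ. -/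
open MeasureTheory Set
open scoped ENNReal

def IsIso {M Ω : Type*} [MeasurableSpace M] [MeasurableSpace Ω]
    (μ : Measure M) (ν : Measure Ω) (T : M → M) (S : Ω → Ω) (φ : M → Ω) : Prop :=
  ∃ (Mh : Set M) (Ωh : Set Ω), MeasurableSet Mh ∧ MeasurableSet Ωh ∧
    μ Mhᶜ = 0 ∧ ν Ωhᶜ = 0 ∧ Set.MapsTo T Mh Mh ∧ Set.MapsTo S Ωh Ωh ∧
    Set.BijOn φ Mh Ωh ∧
    (∀ A : Set M, MeasurableSet A → A ⊆ Mh → MeasurableSet (φ '' A) ∧ ν (φ '' A) = μ A) ∧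
    (∀ B : Set Ω, MeasurableSet B → B ⊆ Ωh → MeasurableSet (Mh ∩ φ ⁻¹' B)) ∧
    (∀ m ∈ Mh, φ (T m) = S (φ m))

/-!
A factor map `f` from the Bernoulli shift with letter distribution `P` to the one with letter
distribution `Q` cannot raise entropy. The letter `f ω 0` is determined, up to an arbitrarily small
probability of error, by finitely many letters `ω t` with `-k ≤ t < k`. By stationarity the word
`f ω 0, …, f ω (N - 1)` can thus be described by the `N + 2 * k` letters of `ω` with
`-k ≤ t < N + k`, followed by corrections at the few wrongly predicted positions. By the Gibbs
inequality the entropy of the word is at most the expected length of this code, hence at most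
`(N + 2 * k) * H(P) + N * η`, where `η` tends to `0` with the probability of error. The word has
independent letters, so its entropy is `N * H(Q)`; dividing by `N` gives `H(Q) ≤ H(P)`. An
isomorphism yields factor maps in both directions.
-/

section Entropy

variable {α β : Type*} [MeasurableSpace α] [MeasurableSpace β]

/-- The Shannon entropy, in nats, of a probability measure on a finite measurable space, written as
the expected information content so that no enumeration of the space is involved. -/
noncomputable def entropy (μ : Measure α) : ℝ := ∫ a, -Real.log (μ.real {a}) ∂μ

theorem entropy_eq_sum [Fintype α] [MeasurableSingletonClass α] (μ : Measure α)
    [IsFiniteMeasure μ] : entropy μ = ∑ a, Real.negMulLog (μ.real {a}) := by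
  simp only [entropy, integral_fintype Integrable.of_finite, Real.negMulLog, smul_eq_mul, neg_mul,
    mul_neg]

theorem ae_measureReal_singleton_pos [Countable α] (μ : Measure α) [IsFiniteMeasure μ] :
    ∀ᵐ a ∂μ, 0 < μ.real {a} :=
  ae_iff_of_countable.2 fun _ ha ↦ ENNReal.toReal_pos ha (measure_ne_top _ _)

theorem integral_div_measureReal_singleton_le_sum [Fintype α] [MeasurableSingletonClass α]
    (μ : Measure α) [IsFiniteMeasure μ] {r : α → ℝ} (hr : ∀ a, 0 ≤ r a) :
    ∫ a, r a / μ.real {a} ∂μ ≤ ∑ a, r a := by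
  rw [integral_fintype Integrable.of_finite]
  refine Finset.sum_le_sum fun a _ ↦ ?_
  rw [smul_eq_mul, mul_div_left_comm]
  exact mul_le_of_le_one_right (hr a) (div_self_le_one _)

theorem entropy_le_integral_neg_log [Fintype α] [MeasurableSingletonClass α] (μ : Measure α)
    [IsProbabilityMeasure μ] {r : α → ℝ} (hr : ∀ a, 0 ≤ r a) (hr_sum : ∑ a, r a ≤ 1)
    (hr_pos : ∀ᵐ a ∂μ, 0 < r a) :
    entropy μ ≤ ∫ a, -Real.log (r a) ∂μ := by
  have hlog : ∀ᵐ a ∂μ, -Real.log (μ.real {a}) ≤ -Real.log (r a) + (r a / μ.real {a} - 1) := by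
    filter_upwards [hr_pos, ae_measureReal_singleton_pos μ] with a hra hμa
    have := Real.log_le_sub_one_of_pos (div_pos hra hμa)
    rw [Real.log_div hra.ne' hμa.ne'] at this
    linarith
  calc entropy μ ≤ ∫ a, (-Real.log (r a) + (r a / μ.real {a} - 1)) ∂μ :=
        integral_mono_ae .of_finite .of_finite hlog
    _ = ∫ a, -Real.log (r a) ∂μ + (∫ a, r a / μ.real {a} ∂μ - 1) := by
        rw [integral_add .of_finite .of_finite, integral_sub .of_finite .of_finite]
        simp
    _ ≤ ∫ a, -Real.log (r a) ∂μ := by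
        linarith [integral_div_measureReal_singleton_le_sum μ hr]

theorem entropy_map [Countable β] [MeasurableSingletonClass β] (μ : Measure α) {g : α → β}
    (hg : Measurable g) : entropy (μ.map g) = ∫ a, -Real.log ((μ.map g).real {g a}) ∂μ :=
  integral_map hg.aemeasurable (measurable_of_countable _).aestronglyMeasurable

theorem entropy_map_le [Finite α] [MeasurableSingletonClass α] [Countable β]
    [MeasurableSingletonClass β] (μ : Measure α) [IsFiniteMeasure μ] (g : α → β) :
    entropy (μ.map g) ≤ entropy μ := by
  rw [entropy_map μ (measurable_of_finite g)]
  refine integral_mono_ae .of_finite .of_finite ?_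
  filter_upwards [ae_measureReal_singleton_pos μ] with a ha
  rw [map_measureReal_apply (measurable_of_finite g) (measurableSet_singleton _)]
  gcongr
  · finiteness
  · simp

theorem entropy_snd_le [Finite α] [MeasurableSingletonClass α] [Fintype β]
    [MeasurableSingletonClass β] (ρ : Measure (α × β)) [IsProbabilityMeasure ρ] {κ : α → β → ℝ}
    (hκ : ∀ a b, 0 < κ a b) (hκ_sum : ∀ a, ∑ b, κ a b ≤ 1) :
    entropy ρ.snd ≤ entropy ρ.fst + ∫ z, -Real.log (κ z.1 z.2) ∂ρ := by
  have := Fintype.ofFinite α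
  have hfst_pos : ∀ᵐ z ∂ρ, 0 < ρ.fst.real {z.1} :=
    ae_of_ae_map measurable_fst.aemeasurable (ae_measureReal_singleton_pos ρ.fst)
  have hsum : ∑ z : α × β, ρ.fst.real {z.1} * κ z.1 z.2 ≤ 1 := by
    calc ∑ z : α × β, ρ.fst.real {z.1} * κ z.1 z.2 = ∑ a, ρ.fst.real {a} * ∑ b, κ a b := by
          simp only [Fintype.sum_prod_type, Finset.mul_sum]
      _ ≤ ∑ a, ρ.fst.real {a} :=
          Finset.sum_le_sum fun a _ ↦ mul_le_of_le_one_right measureReal_nonneg (hκ_sum a)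
      _ = 1 := by simp
  calc entropy ρ.snd ≤ entropy ρ := entropy_map_le ρ Prod.snd
    _ ≤ ∫ z, -Real.log (ρ.fst.real {z.1} * κ z.1 z.2) ∂ρ :=
        entropy_le_integral_neg_log ρ (fun z ↦ mul_nonneg measureReal_nonneg (hκ _ _).le) hsum
          (hfst_pos.mono fun z hz ↦ mul_pos hz (hκ _ _))
    _ = ∫ z, (-Real.log (ρ.fst.real {z.1}) + -Real.log (κ z.1 z.2)) ∂ρ := by
        refine integral_congr_ae (hfst_pos.mono fun z hz ↦ ?_)
        simp only [Real.log_mul hz.ne' (hκ _ _).ne', neg_add]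
    _ = entropy ρ.fst + ∫ z, -Real.log (κ z.1 z.2) ∂ρ := by
        rw [integral_add .of_finite .of_finite, Measure.fst, entropy_map ρ measurable_fst]

end Entropy

section Pi

variable {ι : Type*} {α : ι → Type*} [∀ i, MeasurableSpace (α i)]

theorem ae_forall_marginal_pos [Countable ι] [∀ i, Countable (α i)] (μ : Measure (∀ i, α i))
    [IsFiniteMeasure μ] : ∀ᵐ x ∂μ, ∀ i, 0 < (μ.map (Function.eval i)).real {x i} :=
  ae_all_iff.2 fun i ↦ ae_of_ae_map (measurable_pi_apply i).aemeasurable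
    (ae_measureReal_singleton_pos (μ.map (Function.eval i)))

variable [Fintype ι] [∀ i, Finite (α i)] [∀ i, MeasurableSingletonClass (α i)]

theorem integral_neg_log_prod_marginal (μ : Measure (∀ i, α i)) [IsFiniteMeasure μ] :
    ∫ x, -Real.log (∏ i, (μ.map (Function.eval i)).real {x i}) ∂μ =
      ∑ i, entropy (μ.map (Function.eval i)) := by
  simp only [entropy_map μ (measurable_pi_apply _)]
  rw [← integral_finsetSum _ fun _ _ ↦ .of_finite]
  refine integral_congr_ae ((ae_forall_marginal_pos μ).mono fun x hx ↦ ?_)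
  simp only [Real.log_prod fun i _ ↦ (hx i).ne', Finset.sum_neg_distrib]

theorem entropy_le_sum_entropy_marginal (μ : Measure (∀ i, α i)) [IsProbabilityMeasure μ] :
    entropy μ ≤ ∑ i, entropy (μ.map (Function.eval i)) := by
  classical
  have := fun i ↦ Fintype.ofFinite (α i)
  have hmarginal : ∀ i, IsProbabilityMeasure (μ.map (Function.eval i)) := fun i ↦
    Measure.isProbabilityMeasure_map (measurable_pi_apply i).aemeasurable
  have hsum : ∑ x : ∀ i, α i, ∏ i, (μ.map (Function.eval i)).real {x i} ≤ 1 := by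
    rw [← Fintype.prod_sum fun i (a : α i) ↦ (μ.map (Function.eval i)).real {a}]
    simp
  rw [← integral_neg_log_prod_marginal]
  exact entropy_le_integral_neg_log μ (fun x ↦ Finset.prod_nonneg fun _ _ ↦ measureReal_nonneg) hsum
    ((ae_forall_marginal_pos μ).mono fun x hx ↦ Finset.prod_pos fun i _ ↦ hx i)

theorem entropy_pi (μ : ∀ i, Measure (α i)) [∀ i, IsProbabilityMeasure (μ i)] :
    entropy (Measure.pi μ) = ∑ i, entropy (μ i) := by
  have h := integral_neg_log_prod_marginal (Measure.pi μ)
  simp only [(measurePreserving_eval μ _).map_eq] at h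
  rw [← h]
  simp only [entropy, measureReal_def, Measure.pi_singleton, ENNReal.toReal_prod]

end Pi

section Fano

variable {β : Type*} [Fintype β]

section NoisyKernel

variable [DecidableEq β]

/-- The Markov kernel that trusts a prediction `c` with probability `1 - ε` and otherwise guesses
uniformly; coding a letter with it rather than with `c` alone keeps all code lengths finite. -/
noncomputable def noisyKernel (ε : ℝ) (c b : β) : ℝ :=
  (if b = c then 1 - ε else 0) + ε / Fintype.card β

theorem noisyKernel_pos {ε : ℝ} (hε : ε ∈ Ioo 0 1) (c b : β) : 0 < noisyKernel ε c b := by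
  have := hε.1
  have := sub_pos.2 hε.2
  have : Nonempty β := ⟨b⟩
  unfold noisyKernel
  split_ifs <;> positivity

theorem sum_noisyKernel (ε : ℝ) (c : β) : ∑ b, noisyKernel ε c b = 1 := by
  have : Nonempty β := ⟨c⟩
  simp [noisyKernel, Finset.sum_add_distrib, mul_div_cancel₀]

theorem neg_log_noisyKernel_le {ε : ℝ} (hε : ε ∈ Ioo 0 1) (c b : β) :
    -Real.log (noisyKernel ε c b) ≤
      -Real.log (1 - ε) + if b = c then 0 else Real.log (Fintype.card β / ε) := by
  obtain ⟨hε₀, hε₁⟩ := hε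
  unfold noisyKernel
  split_ifs
  · rw [add_zero, neg_le_neg_iff]
    exact Real.log_le_log (sub_pos.2 hε₁) (le_add_of_nonneg_right (by positivity))
  · rw [zero_add, ← Real.log_inv, inv_div]
    exact le_add_of_nonneg_left (neg_nonneg.2 (Real.log_nonpos (by linarith) (by linarith)))

theorem integral_neg_log_noisyKernel_le {Ω : Type*} [Finite Ω] [MeasurableSpace Ω]
    [MeasurableSingletonClass Ω] (ρ : Measure Ω) [IsProbabilityMeasure ρ] {ε : ℝ}
    (hε : ε ∈ Ioo 0 1) (c b : Ω → β) :
    ∫ z, -Real.log (noisyKernel ε (c z) (b z)) ∂ρ ≤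
      -Real.log (1 - ε) + ρ.real {z | b z ≠ c z} * Real.log (Fintype.card β / ε) := by
  calc ∫ z, -Real.log (noisyKernel ε (c z) (b z)) ∂ρ
    _ ≤ ∫ z, (-Real.log (1 - ε) +
          {z | b z ≠ c z}.indicator (fun _ ↦ Real.log (Fintype.card β / ε)) z) ∂ρ := by
        refine integral_mono .of_finite .of_finite fun z ↦ ?_
        simpa [indicator_apply, ite_not] using neg_log_noisyKernel_le hε (c z) (b z)
    _ = _ := by
        rw [integral_add .of_finite .of_finite,
          integral_indicator_const _ (toFinite _).measurableSet]
        simp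

end NoisyKernel

theorem entropy_snd_pi_le {ι α : Type*} [Fintype ι] [Finite α] [MeasurableSpace α]
    [MeasurableSingletonClass α] [MeasurableSpace β] [MeasurableSingletonClass β]
    (ρ : Measure (α × (ι → β))) [IsProbabilityMeasure ρ] {ε : ℝ} (hε : ε ∈ Ioo 0 1)
    (G : ι → α → β) :
    entropy ρ.snd ≤ entropy ρ.fst + ∑ i, (-Real.log (1 - ε) +
      ρ.real {z | z.2 i ≠ G i z.1} * Real.log (Fintype.card β / ε)) := by
  classical
  calc entropy ρ.snd
    _ ≤ entropy ρ.fst + ∫ z, -Real.log (∏ i, noisyKernel ε (G i z.1) (z.2 i)) ∂ρ := by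
        refine entropy_snd_le (κ := fun a b ↦ ∏ i, noisyKernel ε (G i a) (b i)) ρ
          (fun a b ↦ Finset.prod_pos fun _ _ ↦ noisyKernel_pos hε _ _) fun a ↦ ?_
        rw [← Fintype.prod_sum]
        simp only [sum_noisyKernel, Finset.prod_const_one, le_refl]
    _ = entropy ρ.fst + ∑ i, ∫ z, -Real.log (noisyKernel ε (G i z.1) (z.2 i)) ∂ρ := by
        simp only [Real.log_prod fun _ _ ↦ (noisyKernel_pos hε _ _).ne', ← Finset.sum_neg_distrib]
        rw [integral_finsetSum _ fun _ _ ↦ .of_finite]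
    _ ≤ _ := by
        gcongr
        exact integral_neg_log_noisyKernel_le ρ hε _ _

theorem entropy_map_pi_le {Ω ι α : Type*} [MeasurableSpace Ω] [Fintype ι] [Finite α]
    [MeasurableSpace α] [MeasurableSingletonClass α] [MeasurableSpace β]
    [MeasurableSingletonClass β] (μ : Measure Ω) [IsProbabilityMeasure μ] {X : Ω → α}
    {Y : Ω → ι → β} (hX : Measurable X) (hY : Measurable Y) {ε : ℝ} (hε : ε ∈ Ioo 0 1)
    (G : ι → α → β) :
    entropy (μ.map Y) ≤ entropy (μ.map X) + ∑ i, (-Real.log (1 - ε) +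
      μ.real {ω | Y ω i ≠ G i (X ω)} * Real.log (Fintype.card β / ε)) := by
  have hXY : Measurable fun ω ↦ (X ω, Y ω) := hX.prodMk hY
  have : IsProbabilityMeasure (μ.map fun ω ↦ (X ω, Y ω)) :=
    Measure.isProbabilityMeasure_map hXY.aemeasurable
  have h := entropy_snd_pi_le (μ.map fun ω ↦ (X ω, Y ω)) hε G
  simpa only [Measure.fst_map_prodMk hY, Measure.snd_map_prodMk hX,
    map_measureReal_apply hXY (toFinite _).measurableSet, preimage_ofPred_eq] using h

end Fano

section FactorMap

variable {M Ω : Type*} [MeasurableSpace M] [MeasurableSpace Ω]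
  {μ : Measure M} {ν : Measure Ω} {T : M → M} {S : Ω → Ω}

/-- A factor map between measure-preserving systems: a measure-preserving map intertwining the two
transformations almost everywhere. Unlike an isomorphism `IsIso`, it need not be invertible. -/
structure IsFactorMap (μ : Measure M) (ν : Measure Ω) (T : M → M) (S : Ω → Ω) (f : M → Ω) :
    Prop where
  measurePreserving : MeasurePreserving f μ ν
  ae_comm : ∀ᵐ x ∂μ, f (T x) = S (f x)

theorem IsFactorMap.ae_iterate {f : M → Ω} (hf : IsFactorMap μ ν T S f)
    (hT : Measure.QuasiMeasurePreserving T μ μ) : ∀ᵐ x ∂μ, ∀ i : ℕ, f (T^[i] x) = S^[i] (f x) := by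
  have hcomm : ∀ᵐ x ∂μ, ∀ i : ℕ, f (T (T^[i] x)) = S (f (T^[i] x)) :=
    ae_all_iff.2 fun i ↦ (hT.iterate i).ae hf.ae_comm
  filter_upwards [hcomm] with x hx i
  induction i with
  | zero => rfl
  | succ i ih => rw [Function.iterate_succ_apply', Function.iterate_succ_apply', hx, ih]

theorem IsIso.exists_isFactorMap [NeZero μ] {φ : M → Ω} (hφ : IsIso μ ν T S φ) :
    ∃ f, IsFactorMap μ ν T S f := by
  classical
  obtain ⟨A, B, hA, hB, hAc, hBc, hTA, -, hbij, himage, hpreimage, hcomm⟩ := hφ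
  obtain ⟨x₀⟩ := μ.nonempty_of_neZero
  -- Nothing is known about `φ` off `A`, so it is replaced there by a constant.
  let f : M → Ω := A.piecewise φ fun _ ↦ φ x₀
  have hfφ : EqOn f φ A := piecewise_eqOn A _ _
  have hpre (C : Set Ω) : f ⁻¹' C ∩ A = A ∩ φ ⁻¹' (C ∩ B) := by
    ext x
    constructor
    · rintro ⟨hxC, hxA⟩
      exact ⟨hxA, hfφ hxA ▸ hxC, hbij.mapsTo hxA⟩
    · rintro ⟨hxA, hxC, -⟩
      exact ⟨by rwa [mem_preimage, hfφ hxA], hxA⟩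
  have hpre_meas {C : Set Ω} (hC : MeasurableSet C) : MeasurableSet (A ∩ φ ⁻¹' (C ∩ B)) :=
    hpreimage _ (hC.inter hB) inter_subset_right
  have hf : Measurable f := by
    refine measurable_of_restrict_of_restrict_compl hA (fun C hC ↦ ?_) ?_
    · have : A.domRestrict f ⁻¹' C = Subtype.val ⁻¹' (A ∩ φ ⁻¹' (C ∩ B)) := by
        ext x
        simp only [← hpre, mem_preimage, mem_inter_iff, x.2, and_true, domRestrict_apply]
      rw [this]
      exact measurable_subtype_coe (hpre_meas hC)
    · rw [domRestrict_piecewise_compl]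
      exact measurable_const
  refine ⟨f, ⟨hf, Measure.ext fun C hC ↦ ?_⟩, ?_⟩
  · have himage_pre : φ '' (A ∩ φ ⁻¹' (C ∩ B)) = C ∩ B := by
      rw [image_inter_preimage, hbij.image_eq, inter_comm C, ← inter_assoc, inter_self]
    rw [Measure.map_apply hf hC, ← measure_inter_conull hAc, hpre,
      ← (himage _ (hpre_meas hC) inter_subset_left).2, himage_pre, measure_inter_conull hBc]
  · filter_upwards [mem_ae_iff.2 hAc] with x hx
    rw [hfφ hx, hfφ (hTA hx), hcomm x hx]

theorem IsIso.exists_symm [Nonempty M] {φ : M → Ω} (hφ : IsIso μ ν T S φ) :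
    ∃ ψ, IsIso ν μ S T ψ := by
  obtain ⟨A, B, hA, hB, hAc, hBc, hTA, hSB, hbij, himage, hpreimage, hcomm⟩ := hφ
  let ψ := Function.invFunOn φ A
  have hinv : InvOn ψ φ A B := hbij.invOn_invFunOn
  have hψ : BijOn ψ B A := hbij.symm hinv.symm
  have hψ_image {D : Set Ω} (hD : D ⊆ B) : ψ '' D = A ∩ φ ⁻¹' D := by
    rw [← hψ.image_eq, inter_comm, ← hinv.2.image_inter', inter_eq_left.2 hD]
  have hψ_preimage {C : Set M} (hC : C ⊆ A) : B ∩ ψ ⁻¹' C = φ '' C := by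
    rw [← hbij.image_eq, inter_comm, ← hinv.1.image_inter', inter_eq_left.2 hC]
  refine ⟨ψ, B, A, hB, hA, hBc, hAc, hSB, hTA, hψ, fun D hD hDB ↦ ?_, fun C hC hCA ↦ ?_,
    fun y hy ↦ ?_⟩
  · have hmeas := hpreimage D hD hDB
    rw [hψ_image hDB]
    refine ⟨hmeas, ?_⟩
    rw [← (himage _ hmeas inter_subset_left).2, image_inter_preimage, hbij.image_eq,
      inter_eq_right.2 hDB]
  · rw [hψ_preimage hCA]
    exact (himage C hC hCA).1
  · refine hbij.injOn (hψ.mapsTo (hSB hy)) (hTA (hψ.mapsTo hy)) ?_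
    rw [hcomm _ (hψ.mapsTo hy), hinv.2 hy, hinv.2 (hSB hy)]

end FactorMap

section Cylinder

variable {ι : Type*} {α : ι → Type*} [∀ i, MeasurableSpace (α i)]

theorem exists_measureReal_symmDiff_cylinder_le (μ : Measure (∀ i, α i)) [IsFiniteMeasure μ]
    {A : Set (∀ i, α i)} (hA : MeasurableSet A) {δ : ℝ} (hδ : 0 < δ) :
    ∃ (s : Finset ι) (S : Set (∀ i : s, α i)), MeasurableSet S ∧
      μ.real (symmDiff A (cylinder s S)) ≤ δ := by
  have hdense : μ.MeasureDense (measurableCylinders α) :=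
    .of_generateFrom_isSetAlgebra_finite μ isSetAlgebra_measurableCylinders
      generateFrom_measurableCylinders.symm
  obtain ⟨C, hC, hAC⟩ := hdense.approx A hA (measure_ne_top _ _) δ hδ
  obtain ⟨s, S, hS, rfl⟩ := (mem_measurableCylinders C).1 hC
  exact ⟨s, S, hS, ENNReal.toReal_le_of_le_ofReal hδ.le hAC.le⟩

theorem exists_measureReal_ne_comp_restrict_le {β : Type*} [Finite β] [Nonempty β]
    [MeasurableSpace β] [MeasurableSingletonClass β] (μ : Measure (∀ i, α i)) [IsFiniteMeasure μ]
    {Y : (∀ i, α i) → β} (hY : Measurable Y) {δ : ℝ} (hδ : 0 < δ) :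
    ∃ (s : Finset ι) (G : (∀ i : s, α i) → β), Measurable G ∧
      μ.real {ω | Y ω ≠ G (s.restrict ω)} ≤ δ := by
  classical
  have := Fintype.ofFinite β
  choose s S hS hYS using fun b : β ↦ exists_measureReal_symmDiff_cylinder_le μ
    (hY (measurableSet_singleton b)) (δ := δ / Fintype.card β) (by positivity)
  have hs (b : β) : s b ⊆ Finset.univ.biUnion s :=
    Finset.subset_biUnion_of_mem s (Finset.mem_univ b)
  let candidate (x : ∀ i : Finset.univ.biUnion s, α i) (b : β) : Prop :=
    Finset.restrict₂ (hs b) x ∈ S b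
  have hcandidate : Measurable candidate := measurable_pi_lambda _ fun b ↦
    measurableSet_setOfPred.1 (Finset.measurable_restrict₂ (hs b) (hS b))
  refine ⟨Finset.univ.biUnion s, fun x ↦ Classical.epsilon (candidate x),
    (measurable_of_finite Classical.epsilon).comp hcandidate, ?_⟩
  -- Off the union of the errors the only candidate for the value of `Y` at `ω` is `Y ω` itself.
  have hsub : {ω | Y ω ≠ Classical.epsilon (candidate ((Finset.univ.biUnion s).restrict ω))} ⊆
      ⋃ b ∈ Finset.univ, symmDiff (Y ⁻¹' {b}) (cylinder (s b) (S b)) := by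
    intro ω hω
    by_contra hagree
    have hcandidate_iff (b : β) : candidate ((Finset.univ.biUnion s).restrict ω) b ↔ Y ω = b := by
      simp only [mem_iUnion, Finset.mem_univ, exists_const, not_exists, Set.mem_symmDiff] at hagree
      have := hagree b
      simp only [mem_preimage, mem_singleton_iff, mem_cylinder] at this
      change (s b).restrict ω ∈ S b ↔ Y ω = b
      tauto
    exact hω ((hcandidate_iff _).1 (Classical.epsilon_spec ⟨Y ω, (hcandidate_iff _).2 rfl⟩))
  calc _ ≤ μ.real (⋃ b ∈ Finset.univ, symmDiff (Y ⁻¹' {b}) (cylinder (s b) (S b))) :=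
        measureReal_mono hsub (measure_ne_top _ _)
    _ ≤ ∑ b, μ.real (symmDiff (Y ⁻¹' {b}) (cylinder (s b) (S b))) :=
        measureReal_biUnion_finset_le _ _
    _ ≤ ∑ _b : β, δ / Fintype.card β := Finset.sum_le_sum fun b _ ↦ hYS b
    _ = δ := by simp [mul_div_cancel₀]

theorem eq_infinitePi_of_singleton [∀ i, Countable (α i)] [∀ i, MeasurableSingletonClass (α i)]
    (P : ∀ i, Measure (α i)) [∀ i, IsProbabilityMeasure (P i)] {μ : Measure (∀ i, α i)}
    (h : ∀ (F : Finset ι) (a : ∀ i, α i), μ {ω | ∀ i ∈ F, ω i = a i} = ∏ i ∈ F, P i {a i}) :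
    μ = Measure.infinitePi P := by
  classical
  refine (Measure.isProjectiveLimit_infinitePi P).unique (fun F ↦ ?_) |>.symm
  refine Measure.ext_of_singleton fun x ↦ ?_
  have hα (i : ι) : Nonempty (α i) := (P i).nonempty_of_neZero
  let a (i : ι) : α i := if hi : i ∈ F then x ⟨i, hi⟩ else Classical.arbitrary _
  have ha (i : F) : a i = x i := dif_pos i.2
  have hcyl : F.restrict ⁻¹' {x} = {ω | ∀ i ∈ F, ω i = a i} := by
    ext ω
    simp [funext_iff, ← ha]
  rw [Measure.map_apply (Finset.measurable_restrict F) (measurableSet_singleton x), hcyl, h,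
    Measure.pi_singleton, ← Finset.prod_coe_sort]
  simp only [ha]

end Cylinder

section Shift

/-- The left shift on bi-infinite sequences. -/
def shift {α : Type*} (ω : ℤ → α) : ℤ → α := fun t ↦ ω (t + 1)

theorem shift_iterate_apply {α : Type*} (i : ℕ) (ω : ℤ → α) (t : ℤ) :
    shift^[i] ω t = ω (t + i) := by
  induction i generalizing t with
  | zero => simp
  | succ i ih =>
    rw [Function.iterate_succ_apply']
    simp only [shift, ih, Nat.cast_succ]
    ring_nf

variable {α β : Type*} [MeasurableSpace α] [MeasurableSpace β] {μ : Measure (ℤ → α)}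

theorem measurePreserving_shift_infinitePi (P : Measure α) [IsProbabilityMeasure P] :
    MeasurePreserving shift (Measure.infinitePi fun _ : ℤ ↦ P) (Measure.infinitePi fun _ ↦ P) := by
  have hshift : (shift : (ℤ → α) → ℤ → α) =
      MeasurableEquiv.piCongrLeft (fun _ ↦ α) (Equiv.subRight (1 : ℤ)) := by
    ext ω t
    simp [shift, MeasurableEquiv.piCongrLeft, Equiv.piCongrLeft_apply]
  rw [hshift]
  exact ⟨MeasurableEquiv.measurable _, Measure.infinitePi_map_piCongrLeft (fun _ ↦ P) _⟩

theorem le_of_forall_nat_mul_le_add {a b c : ℝ} (h : ∀ N : ℕ, N * a ≤ N * b + c) : a ≤ b := by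
  by_contra! hab
  obtain ⟨N, hN⟩ := exists_nat_gt (c / (a - b))
  rw [div_lt_iff₀ (sub_pos.2 hab)] at hN
  linarith [h N]

theorem exists_subset_Ico_neg (s : Finset ℤ) : ∃ k : ℕ, s ⊆ Finset.Ico (-k : ℤ) k := by
  refine ⟨s.sup Int.natAbs + 1, fun t ht ↦ ?_⟩
  have : t.natAbs ≤ s.sup Int.natAbs := Finset.le_sup ht
  rw [Finset.mem_Ico]
  omega

theorem map_eval_eq_map_eval_zero (hμ : MeasurePreserving shift μ μ) (t : ℤ) :
    μ.map (Function.eval t) = μ.map (Function.eval 0) := by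
  have hperiodic : Function.Periodic (fun t : ℤ ↦ μ.map (Function.eval t)) 1 := fun t ↦ by
    conv_rhs => rw [← hμ.map_eq]
    exact (Measure.map_map (measurable_pi_apply t) hμ.measurable).symm
  simpa using hperiodic.int_mul_eq t

theorem entropy_map_restrict_le [Finite α] [MeasurableSingletonClass α] [IsProbabilityMeasure μ]
    (hμ : MeasurePreserving shift μ μ) (W : Finset ℤ) :
    entropy (μ.map W.restrict) ≤ W.card * entropy (μ.map (Function.eval 0)) := by
  have : IsProbabilityMeasure (μ.map W.restrict) :=
    Measure.isProbabilityMeasure_map (Finset.measurable_restrict W).aemeasurable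
  have hmarginal (i : W) :
      (μ.map W.restrict).map (Function.eval i) = μ.map (Function.eval 0) := by
    rw [← map_eval_eq_map_eval_zero hμ i]
    exact Measure.map_map (measurable_pi_apply i) (Finset.measurable_restrict W)
  simpa [hmarginal] using entropy_le_sum_entropy_marginal (μ.map W.restrict)

theorem entropy_infinitePi_map_restrict [Finite α] [MeasurableSingletonClass α] (P : Measure α)
    [IsProbabilityMeasure P] (W : Finset ℤ) :
    entropy ((Measure.infinitePi fun _ : ℤ ↦ P).map W.restrict) = W.card * entropy P := by
  rw [Measure.infinitePi_map_restrict, entropy_pi]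
  simp

theorem IsFactorMap.measureReal_ne_shift [Countable β] [MeasurableSingletonClass β]
    {ν : Measure (ℤ → β)} {f : (ℤ → α) → ℤ → β} (hf : IsFactorMap μ ν shift shift f)
    (hμ : MeasurePreserving shift μ μ) {g : (ℤ → α) → β} (hg : Measurable g) (i : ℕ) :
    μ.real {ω | f ω i ≠ g (shift^[i] ω)} = μ.real {ω | f ω 0 ≠ g ω} := by
  have hmeas : MeasurableSet {ω | f ω 0 ≠ g ω} :=
    (measurableSet_eq_fun (measurable_pi_iff.1 hf.measurePreserving.measurable 0) hg).compl
  rw [← (hμ.iterate i).measureReal_preimage hmeas.nullMeasurableSet]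
  refine measureReal_congr ?_
  filter_upwards [hf.ae_iterate hμ.quasiMeasurePreserving] with ω hω
  have : f (shift^[i] ω) 0 = f ω i := by rw [hω i, shift_iterate_apply, zero_add]
  exact propext (not_congr (by rw [this]))

variable [Finite α] [MeasurableSingletonClass α] [MeasurableSingletonClass β]
  [IsProbabilityMeasure μ] {Q : Measure β} [IsProbabilityMeasure Q] {f : (ℤ → α) → ℤ → β}

theorem IsFactorMap.card_mul_entropy_le [Fintype β]
    (hf : IsFactorMap μ (Measure.infinitePi fun _ ↦ Q) shift shift f)
    (hμ : MeasurePreserving shift μ μ) {s V W : Finset ℤ} (hV : ∀ i ∈ V, 0 ≤ i)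
    (hW : ∀ i ∈ V, ∀ t ∈ s, t + i ∈ W) (G : (s → α) → β) {ε : ℝ} (hε : ε ∈ Ioo 0 1) :
    V.card * entropy Q ≤ W.card * entropy (μ.map (Function.eval 0)) +
      V.card * (-Real.log (1 - ε) +
        μ.real {ω | f ω 0 ≠ G (s.restrict ω)} * Real.log (Fintype.card β / ε)) := by
  let predict (i : V) (x : W → α) : β := G fun t ↦ x ⟨t + i, hW i i.2 t t.2⟩
  have hY : Measurable (V.restrict ∘ f) :=
    (Finset.measurable_restrict V).comp hf.measurePreserving.measurable
  have hG : Measurable fun ω : ℤ → α ↦ G (s.restrict ω) :=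
    (measurable_of_finite G).comp (Finset.measurable_restrict s)
  have herror (i : V) : μ.real {ω | (V.restrict ∘ f) ω i ≠ predict i (W.restrict ω)} =
      μ.real {ω | f ω 0 ≠ G (s.restrict ω)} := by
    obtain ⟨j, hj⟩ := Int.eq_ofNat_of_zero_le (hV i i.2)
    rw [← hf.measureReal_ne_shift hμ hG j]
    simp only [predict, Finset.restrict_def, Function.comp_def, shift_iterate_apply, hj]
  calc V.card * entropy Q
    _ = entropy (μ.map (V.restrict ∘ f)) := by
        rw [← entropy_infinitePi_map_restrict Q V, ← hf.measurePreserving.map_eq,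
          Measure.map_map (Finset.measurable_restrict V) hf.measurePreserving.measurable]
    _ ≤ _ := entropy_map_pi_le μ (Finset.measurable_restrict W) hY hε predict
    _ ≤ _ := by
        simp only [herror, Finset.sum_const, Finset.card_univ, Fintype.card_coe, nsmul_eq_mul]
        gcongr
        exact entropy_map_restrict_le hμ W

theorem IsFactorMap.entropy_le_add [Fintype β]
    (hf : IsFactorMap μ (Measure.infinitePi fun _ ↦ Q) shift shift f)
    (hμ : MeasurePreserving shift μ μ) {s : Finset ℤ} (G : (s → α) → β) {ε : ℝ}
    (hε : ε ∈ Ioo 0 1) :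
    entropy Q ≤ entropy (μ.map (Function.eval 0)) + (-Real.log (1 - ε) +
      μ.real {ω | f ω 0 ≠ G (s.restrict ω)} * Real.log (Fintype.card β / ε)) := by
  obtain ⟨k, hk⟩ := exists_subset_Ico_neg s
  refine le_of_forall_nat_mul_le_add (c := 2 * k * entropy (μ.map (Function.eval 0))) fun N ↦ ?_
  have hcode := hf.card_mul_entropy_le hμ (s := s) (V := Finset.Ico 0 N)
    (W := Finset.Ico (-k) (N + k)) (fun i hi ↦ (Finset.mem_Ico.1 hi).1) (fun i hi t ht ↦ by
      have := Finset.mem_Ico.1 (hk ht)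
      rw [Finset.mem_Ico] at hi ⊢
      omega) G hε
  have hcard : (Finset.Ico (-k : ℤ) (N + k)).card = N + 2 * k := by
    rw [Int.card_Ico]
    omega
  rw [hcard, Int.card_Ico, sub_zero, Int.toNat_natCast] at hcode
  push_cast at hcode
  linarith

theorem IsFactorMap.entropy_le [Finite β]
    (hf : IsFactorMap μ (Measure.infinitePi fun _ ↦ Q) shift shift f)
    (hμ : MeasurePreserving shift μ μ) : entropy Q ≤ entropy (μ.map (Function.eval 0)) := by
  have := Fintype.ofFinite β
  have : Nonempty β := Q.nonempty_of_neZero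
  have hbound : ∀ ε ∈ Ioo (0 : ℝ) 1, entropy Q ≤ entropy (μ.map (Function.eval 0)) +
      (-Real.log (1 - ε) + (ε * Real.log (Fintype.card β) + Real.negMulLog ε)) := by
    intro ε hε
    obtain ⟨s, G, -, herror⟩ := exists_measureReal_ne_comp_restrict_le μ
      (measurable_pi_iff.1 hf.measurePreserving.measurable 0) hε.1
    have hcard : (1 : ℝ) ≤ Fintype.card β := Nat.one_le_cast.2 Fintype.card_pos
    have hlog : 0 ≤ Real.log (Fintype.card β / ε) :=
      Real.log_nonneg ((one_le_div hε.1).2 (hε.2.le.trans hcard))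
    have hε_log : ε * Real.log (Fintype.card β / ε) =
        ε * Real.log (Fintype.card β) + Real.negMulLog ε := by
      rw [Real.log_div (by positivity) hε.1.ne', Real.negMulLog]
      ring
    rw [← hε_log]
    exact (hf.entropy_le_add hμ G hε).trans (by gcongr)
  have hlim : ContinuousAt (fun ε : ℝ ↦ entropy (μ.map (Function.eval 0)) +
      (-Real.log (1 - ε) + (ε * Real.log (Fintype.card β) + Real.negMulLog ε))) 0 := by
    have := Real.continuous_negMulLog
    fun_prop (disch := norm_num)
  have := ge_of_tendsto (hlim.tendsto.mono_left nhdsWithin_le_nhds)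
    (Filter.mem_of_superset (Ioo_mem_nhdsGT one_pos) hbound)
  simpa using this

end Shift

theorem sum_mul_logb_two_eq_entropy_div {α : Type*} [Fintype α] [MeasurableSpace α]
    [MeasurableSingletonClass α] {p : α → ℝ≥0∞} (hp : ∑ a, p a = 1) :
    ∑ a, -((p a).toReal * Real.logb 2 (p a).toReal) =
      entropy (PMF.ofFintype p hp).toMeasure / Real.log 2 := by
  simp only [entropy_eq_sum, measureReal_def,
    PMF.toMeasure_apply_singleton _ _ (measurableSet_singleton _), PMF.ofFintype_apply,
    Real.negMulLog, Finset.sum_div, Real.logb, neg_mul, neg_div, mul_div_assoc]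

theorem sum_mul_logb_le_of_isFactorMap {α β : Type*} [Fintype α] [MeasurableSpace α]
    [MeasurableSingletonClass α] [Fintype β] [MeasurableSpace β] [MeasurableSingletonClass β]
    {p : α → ℝ≥0∞} {q : β → ℝ≥0∞} (hp : ∑ a, p a = 1) (hq : ∑ b, q b = 1)
    {μ : Measure (ℤ → α)} {ν : Measure (ℤ → β)}
    (hμ : ∀ (F : Finset ℤ) (a : ℤ → α), μ {ω | ∀ i ∈ F, ω i = a i} = ∏ i ∈ F, p (a i))
    (hν : ∀ (F : Finset ℤ) (b : ℤ → β), ν {ω | ∀ i ∈ F, ω i = b i} = ∏ i ∈ F, q (b i))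
    {f : (ℤ → α) → ℤ → β} (hf : IsFactorMap μ ν shift shift f) :
    ∑ b, -((q b).toReal * Real.logb 2 (q b).toReal) ≤
      ∑ a, -((p a).toReal * Real.logb 2 (p a).toReal) := by
  let P : Measure α := (PMF.ofFintype p hp).toMeasure
  let Q : Measure β := (PMF.ofFintype q hq).toMeasure
  obtain rfl : μ = Measure.infinitePi fun _ ↦ P := eq_infinitePi_of_singleton _ fun F a ↦ by
    simp only [P, hμ, PMF.toMeasure_apply_singleton _ _ (measurableSet_singleton _),
      PMF.ofFintype_apply]
  obtain rfl : ν = Measure.infinitePi fun _ ↦ Q := eq_infinitePi_of_singleton _ fun F b ↦ by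
    simp only [Q, hν, PMF.toMeasure_apply_singleton _ _ (measurableSet_singleton _),
      PMF.ofFintype_apply]
  have hle := hf.entropy_le (measurePreserving_shift_infinitePi P)
  rw [Measure.infinitePi_map_eval] at hle
  rw [sum_mul_logb_two_eq_entropy_div hp, sum_mul_logb_two_eq_entropy_div hq]
  gcongr

theorem stmt17_general {α β : Type*} [Fintype α] [MeasurableSpace α] [MeasurableSingletonClass α]
    [Fintype β] [MeasurableSpace β] [MeasurableSingletonClass β]
    (p : α → ℝ≥0∞) (q : β → ℝ≥0∞) (hp : ∑ a, p a = 1) (hq : ∑ b, q b = 1)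
    (μ : Measure (ℤ → α)) (ν : Measure (ℤ → β))
    (hμ : ∀ (F : Finset ℤ) (a : ℤ → α), μ {ω | ∀ i ∈ F, ω i = a i} = ∏ i ∈ F, p (a i))
    (hν : ∀ (F : Finset ℤ) (b : ℤ → β), ν {ω | ∀ i ∈ F, ω i = b i} = ∏ i ∈ F, q (b i))
    (f : (ℤ → α) → ℤ → β) (hf : IsFactorMap μ ν shift shift f)
    (g : (ℤ → β) → ℤ → α) (hg : IsFactorMap ν μ shift shift g) :
    ∑ a, -((p a).toReal * Real.logb 2 (p a).toReal) =
      ∑ b, -((q b).toReal * Real.logb 2 (q b).toReal) :=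
  (sum_mul_logb_le_of_isFactorMap hq hp hν hμ hg).antisymm
    (sum_mul_logb_le_of_isFactorMap hp hq hμ hν hf)

/-- If two Bernoulli shifts are isomorphic, their Kolmogorov–Sinai entropies
`Σᵢ −pᵢ log₂ pᵢ` and `Σⱼ −qⱼ log₂ qⱼ` are equal. -/
theorem stmt17 (n m : ℕ) (hn : 0 < n) (hm : 0 < m)
    (p : Fin n → ℝ≥0∞) (q : Fin m → ℝ≥0∞) (hp : ∑ i, p i = 1) (hq : ∑ j, q j = 1)
    (μ : Measure (ℤ → Fin n)) [IsProbabilityMeasure μ]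
    (ν : Measure (ℤ → Fin m)) [IsProbabilityMeasure ν]
    (hμ : ∀ (F : Finset ℤ) (a : ℤ → Fin n),
      μ {ω | ∀ i ∈ F, ω i = a i} = ∏ i ∈ F, p (a i))
    (hν : ∀ (F : Finset ℤ) (a : ℤ → Fin m),
      ν {ω | ∀ i ∈ F, ω i = a i} = ∏ i ∈ F, q (a i))
    (φ : (ℤ → Fin n) → (ℤ → Fin m))
    (hiso : IsIso μ ν (fun ω t => ω (t + 1)) (fun ω t => ω (t + 1)) φ) :
    ∑ i, -((p i).toReal * Real.logb 2 (p i).toReal)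
      = ∑ j, -((q j).toReal * Real.logb 2 (q j).toReal) := by
  have : Nonempty (ℤ → Fin n) := μ.nonempty_of_neZero
  obtain ⟨f, hf⟩ := hiso.exists_isFactorMap
  obtain ⟨ψ, hψ⟩ := hiso.exists_symm
  obtain ⟨g, hg⟩ := hψ.exists_isFactorMap
  exact stmt17_general p q hp hq μ ν hμ hν f hf g hg
end
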